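/- arXiv:2305.01678 — 2 statements merged into one kernel-verified Lean document; each statement's English description precedes it below -/
import Mathlib

section
/- Let A be a commutative ring in which 2 = 0, and let Q₀, Q₁ : A → A be additive derivations (Qᵢ(xy) = Qᵢ(x)y + x Qᵢ(y) for all x, y and i = 0, 1) satisfying Q₀ ∘ Q₀ = 0, Q₁ ∘ Q₁ = 0, and Q₀ ∘ Q₁ = Q₁ ∘ Q₀ as maps A → A. Suppose a, g ∈ A satisfy Q₀(a) = a², Q₁(a) = a⁴, Q₀(g) = 0, and Q₁(g) = g². Define q₀, q₁ : A → A by q₀(x) = ax + Q₀(x) and q₁(x) = (g + a³)x + Q₁(x). Then q₀ ∘ q₀ = 0, q₁ ∘ q₁ = 0, and q₀ ∘ q₁ = q₁ ∘ q₀. -/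
/-!
For derivations `D`, `E` and elements `u`, `v`, the Leibniz rule gives
`(D + u)(E + v) = (u v + D v) + u E + v D + D E`. Hence `D + u` and `E + v` commute as soon as
`D` and `E` do and `D v = E u`; and when `2 = 0` and `D² = 0`, the square of `D + u` is
multiplication by `D u + u²`, which vanishes if `D u = u²`. The elements `a` and `g + a³` solve
these equations because `Qᵢ (a³) = a² Qᵢ a` when `2 = 0`.
-/

section OddPowers

variable {R A M : Type*} [CommSemiring R] [CommSemiring A] [Algebra R A]
  [AddCommMonoid M] [Module A M] [Module R M]

lemma derivation_odd_pow_of_two_eq_zero (h2 : (2 : A) = 0) (D : Derivation R A M) (a : A)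
    {n : ℕ} (hn : Odd n) : D (a ^ n) = a ^ (n - 1) • D a := by
  have hn1 : (n : A) = 1 := by
    obtain ⟨k, rfl⟩ := hn
    simp [h2]
  rw [D.leibniz_pow, ← Nat.cast_smul_eq_nsmul A, hn1, one_smul]

lemma derivation_add_cube_of_two_eq_zero (h2 : (2 : A) = 0) (D : Derivation R A M) (g a : A) :
    D (g + a ^ 3) = D g + a ^ 2 • D a := by
  rw [map_add, derivation_odd_pow_of_two_eq_zero h2 D a (by decide : Odd 3)]

end OddPowers

section TwistedAction

variable {R A : Type*} [CommSemiring R] [CommSemiring A] [Algebra R A]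

/-- The operator `x ↦ u * x + D x`: the action of `D` on the free rank-one module `A · U`,
written in the coordinate `x` of `U x`, when `D` sends the generator `U` to `U u`. -/
def twistedAction (D : Derivation R A A) (u : A) : A →ₗ[R] A :=
  LinearMap.mulLeft R u + (D : A →ₗ[R] A)

lemma twistedAction_apply (D : Derivation R A A) (u x : A) :
    twistedAction D u x = u * x + D x := rfl

lemma twistedAction_twistedAction_apply (D E : Derivation R A A) (u v x : A) :
    twistedAction D u (twistedAction E v x) =
      (u * v + D v) * x + (u * E x + v * D x) + D (E x) := by
  simp only [twistedAction_apply, map_add, Derivation.leibniz, smul_eq_mul]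
  ring

lemma twistedAction_twistedAction_self (h2 : (2 : A) = 0) {D : Derivation R A A}
    (hD : ∀ x, D (D x) = 0) {u : A} (hu : D u = u ^ 2) (x : A) :
    twistedAction D u (twistedAction D u x) = 0 := by
  calc twistedAction D u (twistedAction D u x)
      = (u * u + u ^ 2) * x + (u * D x + u * D x) + 0 := by
        rw [twistedAction_twistedAction_apply, hu, hD]
    _ = 2 * (u ^ 2 * x + u * D x) := by ring
    _ = 0 := by rw [h2, zero_mul]

lemma twistedAction_commute {D E : Derivation R A A} (hDE : Function.Commute D E) {u v : A}
    (huv : D v = E u) : Function.Commute (twistedAction D u) (twistedAction E v) := by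
  intro x
  rw [twistedAction_twistedAction_apply, twistedAction_twistedAction_apply, huv, hDE x]
  ring

end TwistedAction

/-- An additive self-map of a commutative ring satisfying the Leibniz rule, bundled as a
derivation over `ℤ`, over which linearity is automatic. -/
def derivationOfAddOfMul {A : Type*} [CommRing A] (Q : A → A)
    (hadd : ∀ x y, Q (x + y) = Q x + Q y) (hmul : ∀ x y, Q (x * y) = Q x * y + x * Q y) :
    Derivation ℤ A A :=
  Derivation.mk' (AddMonoidHom.mk' Q hadd).toIntLinearMap fun x y => by
    simp [hmul, add_comm, mul_comm]

/-- **Twisted `E(1)`-module structure (the case `R = ku`).** Let `A` be a commutative ring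
with `2 = 0`, and let `Q₀, Q₁ : A → A` be additive derivations with `Q₀² = 0`, `Q₁² = 0`,
and `Q₀Q₁ = Q₁Q₀`. Suppose `a, g ∈ A` satisfy `Q₀a = a²`, `Q₁a = a⁴`, `Q₀g = 0`, `Q₁g = g²`.
Then the twisted operations `q₀(x) = ax + Q₀x` and `q₁(x) = (g + a³)x + Q₁x` satisfy
`q₀² = 0`, `q₁² = 0`, and `q₀q₁ = q₁q₀`. -/
theorem twisted_E1_module (A : Type) [CommRing A] (h2 : (2 : A) = 0)
    (Q0 Q1 : A → A)
    (hQ0add : ∀ x y : A, Q0 (x + y) = Q0 x + Q0 y)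
    (hQ1add : ∀ x y : A, Q1 (x + y) = Q1 x + Q1 y)
    (hQ0mul : ∀ x y : A, Q0 (x * y) = Q0 x * y + x * Q0 y)
    (hQ1mul : ∀ x y : A, Q1 (x * y) = Q1 x * y + x * Q1 y)
    (hQ0Q0 : ∀ x : A, Q0 (Q0 x) = 0)
    (hQ1Q1 : ∀ x : A, Q1 (Q1 x) = 0)
    (hQ0Q1 : ∀ x : A, Q0 (Q1 x) = Q1 (Q0 x))
    (a g : A)
    (ha0 : Q0 a = a ^ 2) (ha1 : Q1 a = a ^ 4)
    (hg0 : Q0 g = 0) (hg1 : Q1 g = g ^ 2)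
    (q0 q1 : A → A)
    (hq0 : ∀ x : A, q0 x = a * x + Q0 x)
    (hq1 : ∀ x : A, q1 x = (g + a ^ 3) * x + Q1 x) :
    (∀ x : A, q0 (q0 x) = 0) ∧
    (∀ x : A, q1 (q1 x) = 0) ∧
    (∀ x : A, q0 (q1 x) = q1 (q0 x)) := by
  let D0 := derivationOfAddOfMul Q0 hQ0add hQ0mul
  let D1 := derivationOfAddOfMul Q1 hQ1add hQ1mul
  have hD0a : D0 a = a ^ 2 := ha0
  have hD0g : D0 g = 0 := hg0
  have hD1a : D1 a = a ^ 4 := ha1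
  have hD1g : D1 g = g ^ 2 := hg1
  have hD0 : D0 (g + a ^ 3) = D1 a := by
    rw [derivation_add_cube_of_two_eq_zero h2, smul_eq_mul, hD0g, hD0a, hD1a]
    ring
  have hD1 : D1 (g + a ^ 3) = (g + a ^ 3) ^ 2 := by
    rw [derivation_add_cube_of_two_eq_zero h2, smul_eq_mul, hD1g, hD1a]
    linear_combination -(g * a ^ 3) * h2
  obtain rfl : q0 = twistedAction D0 a := funext hq0
  obtain rfl : q1 = twistedAction D1 (g + a ^ 3) := funext hq1
  exact ⟨twistedAction_twistedAction_self h2 hQ0Q0 hD0a,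
    twistedAction_twistedAction_self h2 hQ1Q1 hD1,
    twistedAction_commute (D := D0) (E := D1) hQ0Q1 hD0⟩
end

section
/- Let A be a commutative ring in which 2 = 0, and let Sq¹, Sq² : A → A be additive maps such that Sq¹ is a derivation (Sq¹(xy) = Sq¹(x)y + x Sq¹(y)), Sq² satisfies the Cartan formula Sq²(xy) = Sq²(x)y + Sq¹(x)Sq¹(y) + x Sq²(y), and, as operators on A, Sq¹ ∘ Sq¹ = 0 and Sq² ∘ Sq² = Sq¹ ∘ Sq² ∘ Sq¹. Suppose a, b ∈ A satisfy Sq¹(a) = a², Sq²(a) = 0, and Sq²(b) = b². Define s₁, s₂ : A → A by s₁(x) = ax + Sq¹(x) and s₂(x) = bx + a Sq¹(x) + Sq²(x). Then s₁ ∘ s₁ = 0 and s₂ ∘ s₂ = s₁ ∘ s₂ ∘ s₁. -/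
/-!
Think of the twisted module as `A · U`, where the Thom class `U` has `Sq¹U = aU` and `Sq²U = bU`.
Both twisted operations then obey the Cartan formula for the product `x U · m`, with the twisted
operations acting on `x U` and the untwisted ones on `m`. In characteristic two, the relations
`Sq¹Sq¹ = 0` and `Sq²Sq² = Sq¹Sq²Sq¹` pass from two factors to their product under a Cartan
formula; since the module consists of the products `U · m`, it is enough to verify them on `U`
itself. There `Sq¹(aU) = 0`, and `Sq²Sq²U = a Sq¹(b) U = Sq¹Sq²Sq¹U`.
-/

/-- Two additive operations `Sq¹` and `Sq²` on `M`. No relation between them is built in, so that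
the untwisted and the twisted actions are objects of the same type before either is known to be an
`A(1)`-action. -/
structure SteenrodPair (M : Type*) [AddCommMonoid M] where
  sq1 : M →+ M
  sq2 : M →+ M

namespace SteenrodPair

/-- The defining relations of `A(1)`, imposed at a single element `m`: for a twisted module they
only have to be checked at the Thom class. -/
structure RelationsAt {M : Type*} [AddCommMonoid M] (τ : SteenrodPair M) (m : M) : Prop where
  sq1_sq1 : τ.sq1 (τ.sq1 m) = 0
  sq2_sq2 : τ.sq2 (τ.sq2 m) = τ.sq1 (τ.sq2 (τ.sq1 m))

/-- The Cartan formula for a biadditive pairing `μ`, with independent operations on the two factors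
and on the target: `μ` may pair the twisted operations on a ring with the untwisted ones on a
module. -/
structure IsCartan {X Y Z : Type*} [AddCommMonoid X] [AddCommMonoid Y] [AddCommMonoid Z]
    (μ : X →+ Y →+ Z) (σ : SteenrodPair X) (τ : SteenrodPair Y) (ρ : SteenrodPair Z) : Prop where
  sq1_apply : ∀ x y, ρ.sq1 (μ x y) = μ (σ.sq1 x) y + μ x (τ.sq1 y)
  sq2_apply : ∀ x y,
    ρ.sq2 (μ x y) = μ (σ.sq2 x) y + μ (σ.sq1 x) (τ.sq1 y) + μ x (τ.sq2 y)

section Pairing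

variable {X Y Z : Type*} [AddCommMonoid X] [AddCommMonoid Y] [AddCommMonoid Z]
  {μ : X →+ Y →+ Z} {σ : SteenrodPair X} {τ : SteenrodPair Y} {ρ : SteenrodPair Z} {x : X} {y : Y}

theorem IsCartan.sq1_sq1_apply (hμ : IsCartan μ σ τ ρ) (hZ : ∀ z : Z, z + z = 0)
    (hx : σ.sq1 (σ.sq1 x) = 0) (hy : τ.sq1 (τ.sq1 y) = 0) :
    ρ.sq1 (ρ.sq1 (μ x y)) = 0 := by
  simp only [hμ.sq1_apply, map_add, hx, hy, map_zero, AddMonoidHom.zero_apply, zero_add, add_zero,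
    hZ]

theorem IsCartan.sq2_sq2_apply (hμ : IsCartan μ σ τ ρ) (hZ : ∀ z : Z, z + z = 0)
    (hx : σ.sq1 (σ.sq1 x) = 0) :
    ρ.sq2 (ρ.sq2 (μ x y)) =
      μ (σ.sq2 (σ.sq2 x)) y + μ (σ.sq1 (σ.sq2 x) + σ.sq2 (σ.sq1 x)) (τ.sq1 y) +
        μ (σ.sq1 x) (τ.sq1 (τ.sq2 y) + τ.sq2 (τ.sq1 y)) + μ x (τ.sq2 (τ.sq2 y)) := by
  have cross_term_twice := hZ (μ (σ.sq2 x) (τ.sq2 y))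
  simp only [hμ.sq2_apply, map_add, AddMonoidHom.add_apply, hx, map_zero, AddMonoidHom.zero_apply]
  grind

theorem IsCartan.sq1_sq2_sq1_apply (hμ : IsCartan μ σ τ ρ)
    (hx : σ.sq1 (σ.sq1 x) = 0) (hy : τ.sq1 (τ.sq1 y) = 0) :
    ρ.sq1 (ρ.sq2 (ρ.sq1 (μ x y))) =
      μ (σ.sq1 (σ.sq2 (σ.sq1 x))) y + μ (σ.sq1 (σ.sq2 x) + σ.sq2 (σ.sq1 x)) (τ.sq1 y) +
        μ (σ.sq1 x) (τ.sq1 (τ.sq2 y) + τ.sq2 (τ.sq1 y)) + μ x (τ.sq1 (τ.sq2 (τ.sq1 y))) := by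
  simp only [hμ.sq1_apply, hμ.sq2_apply, map_add, AddMonoidHom.add_apply, hx, hy, map_zero,
    AddMonoidHom.zero_apply]
  abel

theorem RelationsAt.apply (hμ : IsCartan μ σ τ ρ) (hZ : ∀ z : Z, z + z = 0)
    (hx : σ.RelationsAt x) (hy : τ.RelationsAt y) : ρ.RelationsAt (μ x y) where
  sq1_sq1 := hμ.sq1_sq1_apply hZ hx.sq1_sq1 hy.sq1_sq1
  sq2_sq2 := by
    rw [hμ.sq2_sq2_apply hZ hx.sq1_sq1, hμ.sq1_sq2_sq1_apply hx.sq1_sq1 hy.sq1_sq1, hx.sq2_sq2,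
      hy.sq2_sq2]

end Pairing

section Twist

variable {A M : Type*} [Semiring A] [AddCommMonoid M] [Module A M]

/-- The twisted operations `s₁` and `s₂`, on an arbitrary `A`-module. The Thom class is left
implicit: `m` stands for `U m`. -/
def twist (τ : SteenrodPair M) (a b : A) : SteenrodPair M where
  sq1 := smulAddHom A M a + τ.sq1
  sq2 := smulAddHom A M b + (smulAddHom A M a).comp τ.sq1 + τ.sq2

@[simp]
theorem twist_sq1_apply (τ : SteenrodPair M) (a b : A) (m : M) :
    (τ.twist a b).sq1 m = a • m + τ.sq1 m :=
  rfl

@[simp]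
theorem twist_sq2_apply (τ : SteenrodPair M) (a b : A) (m : M) :
    (τ.twist a b).sq2 m = b • m + a • τ.sq1 m + τ.sq2 m :=
  rfl

theorem IsCartan.twist {σ : SteenrodPair A} {τ : SteenrodPair M}
    (h : IsCartan (smulAddHom A M) σ τ τ) (a b : A) :
    IsCartan (smulAddHom A M) (σ.twist a b) τ (τ.twist a b) where
  sq1_apply x m := by
    have sq1_smul := h.sq1_apply x m
    simp only [smulAddHom_apply] at sq1_smul
    simp only [smulAddHom_apply, twist_sq1_apply, sq1_smul, add_smul, smul_eq_mul, mul_smul]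
    abel
  sq2_apply x m := by
    have sq1_smul := h.sq1_apply x m
    have sq2_smul := h.sq2_apply x m
    simp only [smulAddHom_apply] at sq1_smul sq2_smul
    simp only [smulAddHom_apply, twist_sq1_apply, twist_sq2_apply, sq1_smul, sq2_smul, smul_add,
      add_smul, smul_eq_mul, mul_smul]
    abel

end Twist

section ThomClass

variable {A : Type*} [Ring A] {σ : SteenrodPair A} {a b : A}

theorem IsCartan.sq1_one (hσ : IsCartan AddMonoidHom.mul σ σ σ) : σ.sq1 1 = 0 := by
  have h : σ.sq1 (1 * 1) = σ.sq1 1 * 1 + 1 * σ.sq1 1 := hσ.sq1_apply 1 1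
  simpa only [one_mul, mul_one, left_eq_add] using h

theorem IsCartan.sq2_one (hσ : IsCartan AddMonoidHom.mul σ σ σ) : σ.sq2 1 = 0 := by
  have h : σ.sq2 (1 * 1) = σ.sq2 1 * 1 + σ.sq1 1 * σ.sq1 1 + 1 * σ.sq2 1 := hσ.sq2_apply 1 1
  simpa only [one_mul, mul_one, hσ.sq1_one, mul_zero, add_zero, left_eq_add] using h

theorem IsCartan.sq1_sq (hσ : IsCartan AddMonoidHom.mul σ σ σ) (hA : ∀ x : A, x + x = 0)
    {x : A} (hx : Commute x (σ.sq1 x)) : σ.sq1 (x ^ 2) = 0 :=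
  calc σ.sq1 (x ^ 2)
    _ = σ.sq1 x * x + x * σ.sq1 x := by rw [pow_two]; exact hσ.sq1_apply x x
    _ = 0 := by rw [hx.eq, hA]

theorem twist_sq1_one (hσ : IsCartan AddMonoidHom.mul σ σ σ) : (σ.twist a b).sq1 1 = a := by
  simp [hσ.sq1_one]

theorem twist_sq2_one (hσ : IsCartan AddMonoidHom.mul σ σ σ) : (σ.twist a b).sq2 1 = b := by
  simp [hσ.sq1_one, hσ.sq2_one]

theorem twist_sq1_self (hA : ∀ x : A, x + x = 0) (ha1 : σ.sq1 a = a ^ 2) :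
    (σ.twist a b).sq1 a = 0 := by
  rw [twist_sq1_apply, ha1, smul_eq_mul, ← pow_two, hA]

theorem twist_sq1_mul_left (hσ : IsCartan AddMonoidHom.mul σ σ σ) (hA : ∀ x : A, x + x = 0)
    (ha1 : σ.sq1 a = a ^ 2) (x : A) : (σ.twist a b).sq1 (a * x) = a * σ.sq1 x :=
  calc (σ.twist a b).sq1 (a * x)
    _ = (σ.twist a b).sq1 a * x + a * σ.sq1 x :=
      (IsCartan.twist (M := A) hσ a b).sq1_apply a x
    _ = a * σ.sq1 x := by rw [twist_sq1_self hA ha1, zero_mul, zero_add]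

theorem twist_sq2_sq2_one (hσ : IsCartan AddMonoidHom.mul σ σ σ) (hA : ∀ x : A, x + x = 0)
    (hb2 : σ.sq2 b = b ^ 2) :
    (σ.twist a b).sq2 ((σ.twist a b).sq2 1) = a * σ.sq1 b :=
  calc (σ.twist a b).sq2 ((σ.twist a b).sq2 1)
    _ = b ^ 2 + a * σ.sq1 b + b ^ 2 := by
      rw [twist_sq2_one hσ, twist_sq2_apply, hb2, smul_eq_mul, smul_eq_mul, ← pow_two]
    _ = a * σ.sq1 b := by rw [add_right_comm, hA, zero_add]

theorem twist_sq1_sq2_sq1_one (hσ : IsCartan AddMonoidHom.mul σ σ σ) (hA : ∀ x : A, x + x = 0)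
    (hab : Commute a b) (ha1 : σ.sq1 a = a ^ 2) (ha2 : σ.sq2 a = 0) :
    (σ.twist a b).sq1 ((σ.twist a b).sq2 ((σ.twist a b).sq1 1)) = a * σ.sq1 b := by
  have sq2_a : (σ.twist a b).sq2 a = a * (b + a ^ 2) := by
    rw [twist_sq2_apply, ha1, ha2, add_zero, smul_eq_mul, smul_eq_mul, ← hab.eq, mul_add]
  have sq1_a_sq : σ.sq1 (a ^ 2) = 0 := hσ.sq1_sq hA (ha1 ▸ Commute.self_pow a 2)
  rw [twist_sq1_one hσ, sq2_a, twist_sq1_mul_left hσ hA ha1, map_add, sq1_a_sq, add_zero]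

theorem relationsAt_twist_one (hσ : IsCartan AddMonoidHom.mul σ σ σ) (hA : ∀ x : A, x + x = 0)
    (hab : Commute a b) (ha1 : σ.sq1 a = a ^ 2) (ha2 : σ.sq2 a = 0) (hb2 : σ.sq2 b = b ^ 2) :
    (σ.twist a b).RelationsAt 1 where
  sq1_sq1 := by rw [twist_sq1_one hσ, twist_sq1_self hA ha1]
  sq2_sq2 := by rw [twist_sq2_sq2_one hσ hA hb2, twist_sq1_sq2_sq1_one hσ hA hab ha1 ha2]

end ThomClass

end SteenrodPair

open SteenrodPair

theorem twisted_A1_module_general {A M : Type*} [Ring A] [AddCommGroup M] [Module A M]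
    (h2 : (2 : A) = 0) {σ : SteenrodPair A} {τ : SteenrodPair M}
    (hσ : IsCartan AddMonoidHom.mul σ σ σ) (hτ : IsCartan (smulAddHom A M) σ τ τ)
    {a b : A} (hab : Commute a b) (ha1 : σ.sq1 a = a ^ 2) (ha2 : σ.sq2 a = 0)
    (hb2 : σ.sq2 b = b ^ 2) {m : M} (hm : τ.RelationsAt m) :
    (τ.twist a b).RelationsAt m := by
  have ring_add_self (x : A) : x + x = 0 := by rw [← two_mul, h2, zero_mul]
  have module_add_self (m : M) : m + m = 0 := by rw [← two_smul A, h2, zero_smul]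
  have thom := relationsAt_twist_one hσ ring_add_self hab ha1 ha2 hb2
  simpa only [smulAddHom_apply, one_smul] using
    thom.apply (hτ.twist a b) module_add_self hm

/-- **Twisted `A(1)`-module structure (the case `R = ko`).** Let `A` be a commutative ring
with `2 = 0`, and let `Sq¹, Sq² : A → A` be additive maps with `Sq¹` a derivation, `Sq²`
satisfying the Cartan formula, `Sq¹Sq¹ = 0`, and `Sq²Sq² = Sq¹Sq²Sq¹`. Suppose `a, b ∈ A`
satisfy `Sq¹a = a²`, `Sq²a = 0`, `Sq²b = b²`. Then the twisted operations
`s₁(x) = ax + Sq¹x` and `s₂(x) = bx + aSq¹x + Sq²x` satisfy `s₁s₁ = 0` and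
`s₂s₂ = s₁s₂s₁`. -/
theorem twisted_A1_module (A : Type) [CommRing A] (h2 : (2 : A) = 0)
    (Sq1 Sq2 : A → A)
    (hSq1add : ∀ x y : A, Sq1 (x + y) = Sq1 x + Sq1 y)
    (hSq2add : ∀ x y : A, Sq2 (x + y) = Sq2 x + Sq2 y)
    (hSq1mul : ∀ x y : A, Sq1 (x * y) = Sq1 x * y + x * Sq1 y)
    (hSq2mul : ∀ x y : A, Sq2 (x * y) = Sq2 x * y + Sq1 x * Sq1 y + x * Sq2 y)
    (hSq1Sq1 : ∀ x : A, Sq1 (Sq1 x) = 0)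
    (hSq2Sq2 : ∀ x : A, Sq2 (Sq2 x) = Sq1 (Sq2 (Sq1 x)))
    (a b : A)
    (ha1 : Sq1 a = a ^ 2) (ha2 : Sq2 a = 0) (hb2 : Sq2 b = b ^ 2)
    (s1 s2 : A → A)
    (hs1 : ∀ x : A, s1 x = a * x + Sq1 x)
    (hs2 : ∀ x : A, s2 x = b * x + a * Sq1 x + Sq2 x) :
    (∀ x : A, s1 (s1 x) = 0) ∧
    (∀ x : A, s2 (s2 x) = s1 (s2 (s1 x))) := by
  obtain rfl : s1 = fun x ↦ a * x + Sq1 x := funext hs1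
  obtain rfl : s2 = fun x ↦ b * x + a * Sq1 x + Sq2 x := funext hs2
  let σ : SteenrodPair A := ⟨.mk' Sq1 hSq1add, .mk' Sq2 hSq2add⟩
  have relations (x : A) : (σ.twist a b).RelationsAt x :=
    twisted_A1_module_general h2 (σ := σ) ⟨hSq1mul, hSq2mul⟩ ⟨hSq1mul, hSq2mul⟩
      (Commute.all a b) ha1 ha2 hb2 ⟨hSq1Sq1 x, hSq2Sq2 x⟩
  exact ⟨fun x ↦ (relations x).sq1_sq1, fun x ↦ (relations x).sq2_sq2⟩
end
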